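/- There exists a constant c > 0 such that for every n ≥ 2, every equilateral subset of ℓ_1^n has cardinality at most c · n · log n. -/

import Mathlib

open Finset in
lemma ap_min_psd {ι : Type*} [DecidableEq ι] (c : ι → ℝ) (m : ℕ) : ∀ (s : Finset ι), s.card = m →
    ∀ y : ι → ℝ, (∀ j ∈ s, 0 ≤ y j) →
    0 ≤ ∑ j ∈ s, ∑ k ∈ s, c j * c k * min (y j) (y k) := by
  induction m with
  | zero =>
    intro s hs y _
    rw [Finset.card_eq_zero] at hs
    simp [hs]
  | succ m ih =>
    intro s hs y hy
    have hne : s.Nonempty := by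
      rw [← Finset.card_pos]; omega
    obtain ⟨j0, hj0, hmin⟩ := Finset.exists_min_image s y hne
    have h1 := ih (s.erase j0) (by rw [Finset.card_erase_of_mem hj0]; omega)
      (fun j => y j - y j0) (fun j hj => by
        have := hmin j (Finset.mem_of_mem_erase hj); linarith)
    have h2 : ∑ j ∈ s, ∑ k ∈ s, c j * c k * min (y j) (y k)
        = y j0 * (∑ j ∈ s, c j) ^ 2
          + ∑ j ∈ s, ∑ k ∈ s, c j * c k * min (y j - y j0) (y k - y j0) := by
      rw [pow_two, Finset.sum_mul_sum, Finset.mul_sum, ← Finset.sum_add_distrib]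
      refine Finset.sum_congr rfl fun j _ => ?_
      rw [Finset.mul_sum, ← Finset.sum_add_distrib]
      refine Finset.sum_congr rfl fun k _ => ?_
      rw [min_sub_sub_right]; ring
    have h3 : ∑ j ∈ s, ∑ k ∈ s, c j * c k * min (y j - y j0) (y k - y j0)
        = ∑ j ∈ s.erase j0, ∑ k ∈ s.erase j0, c j * c k * min (y j - y j0) (y k - y j0) := by
      symm
      rw [Finset.sum_subset (Finset.erase_subset j0 s)]
      · refine Finset.sum_congr rfl fun j hj => ?_
        refine Finset.sum_subset (Finset.erase_subset j0 s) ?_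
        intro k hk hk'
        have : k = j0 := by
          by_contra h; exact hk' (Finset.mem_erase.2 ⟨h, hk⟩)
        subst this
        have := hmin j hj
        rw [sub_self, min_eq_right (by linarith)]; simp
      · intro j hj hj'
        have : j = j0 := by
          by_contra h; exact hj' (Finset.mem_erase.2 ⟨h, hj⟩)
        subst this
        refine Finset.sum_eq_zero fun k hk => ?_
        have := hmin k (Finset.mem_of_mem_erase hk)
        rw [sub_self, min_eq_left (by linarith)]; simp
    rw [h2, h3]
    have := hy j0 hj0
    positivity

lemma ap_fiber {ι : Type*} [Fintype ι] (c : ι → ℝ) (l : ι → ℤ)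
    (hc : ∀ v : ℤ, ∑ j, (if l j = v then c j else 0) = 0) (h : ℤ → ℝ) :
    ∑ k, c k * h (l k) = 0 := by
  classical
  rw [← Finset.sum_fiberwise_of_maps_to (s := Finset.univ) (t := Finset.univ.image l) (g := l)
    (fun k _ => Finset.mem_image_of_mem _ (Finset.mem_univ k))]
  refine Finset.sum_eq_zero fun v _ => ?_
  have : ∑ i with l i = v, c i * h (l i) = (∑ i with l i = v, c i) * h v := by
    rw [Finset.sum_mul]
    refine Finset.sum_congr rfl fun i hi => ?_
    rw [(Finset.mem_filter.1 hi).2]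
  rw [this, Finset.sum_filter, hc, zero_mul]

/-- the cell kernel -/
noncomputable def apK {ι : Type*} (l : ι → ℤ) (z : ι → ℝ) (j k : ι) : ℝ :=
  if l j = l k then min (z j) (z k) else 0

lemma apK_psd {ι : Type*} [Fintype ι] (l : ι → ℤ) (z : ι → ℝ) (hz : ∀ j, 0 ≤ z j) (c : ι → ℝ) :
    0 ≤ ∑ j, ∑ k, c j * c k * apK l z j k := by
  classical
  rw [← Finset.sum_fiberwise_of_maps_to (s := Finset.univ) (t := Finset.univ.image l) (g := l)
    (fun k _ => Finset.mem_image_of_mem _ (Finset.mem_univ k))]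
  refine Finset.sum_nonneg fun v _ => ?_
  refine (ap_min_psd c _ (Finset.univ.filter fun i => l i = v) rfl z (fun j _ => hz j)).trans_eq ?_
  refine Finset.sum_congr rfl fun j hj => ?_
  rw [Finset.sum_filter]
  refine Finset.sum_congr rfl fun k _ => ?_
  have := (Finset.mem_filter.1 hj).2
  unfold apK
  rw [this]
  by_cases h : l k = v
  · simp [h]
  · simp [h, Ne.symm h]

lemma ap_coord {ι : Type*} [Fintype ι] (y r : ι → ℝ) (l : ι → ℤ) (c : ι → ℝ)
    (hc : ∀ v : ℤ, ∑ j, (if l j = v then c j else 0) = 0)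
    (hl : ∀ j k, l j < l k → y j ≤ y k) (hr : ∀ j k, l j = l k → r j = r k) :
    ∑ j, ∑ k, c j * c k * |y j - y k|
      = - ∑ j, ∑ k, c j * c k * (2 * apK l (fun j => y j - r j) j k) := by
  set g : ι → ℤ → ℝ := fun j v => if l j < v then - y j else if l j = v then y j - r j else y j
    with hg
  have key : ∀ j k, |y j - y k| + 2 * apK l (fun j => y j - r j) j k = g j (l k) + g k (l j) := by
    intro j k
    simp only [hg, apK]
    rcases lt_trichotomy (l j) (l k) with h | h | h
    · have := hl j k h
      rw [abs_of_nonpos (by linarith)]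
      simp [h, h.ne, h.ne', h.not_gt]; ring
    · have := hr j k h
      simp only [h, if_true, lt_irrefl, if_false]
      rw [this]
      rcases le_total (y j) (y k) with h' | h'
      · rw [abs_of_nonpos (by linarith), min_eq_left (by linarith)]; ring
      · rw [abs_of_nonneg (by linarith), min_eq_right (by linarith)]; ring
    · have := hl k j h
      rw [abs_of_nonneg (by linarith)]
      simp [h, h.ne, h.ne', h.not_gt]; ring
  rw [eq_neg_iff_add_eq_zero, ← Finset.sum_add_distrib]
  have h1 : ∑ j, ∑ k, c j * c k * g j (l k) = 0 := by
    refine Finset.sum_eq_zero fun j _ => ?_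
    have := ap_fiber c l hc (g j)
    simp_rw [mul_assoc, ← Finset.mul_sum, this, mul_zero]
  have h2 : ∑ j, ∑ k, c j * c k * g k (l j) = 0 := by
    rw [Finset.sum_comm, ← h1]
    refine Finset.sum_congr rfl fun j _ => Finset.sum_congr rfl fun k _ => ?_
    ring
  calc _ = ∑ j, ∑ k, c j * c k * g j (l k) + ∑ j, ∑ k, c j * c k * g k (l j) := by
        rw [← Finset.sum_add_distrib]
        refine Finset.sum_congr rfl fun j _ => ?_
        rw [← Finset.sum_add_distrib, ← Finset.sum_add_distrib]
        refine Finset.sum_congr rfl fun k _ => ?_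
        rw [← mul_add, ← mul_add, key]
    _ = 0 := by rw [h1, h2, add_zero]

lemma ap_swap {ι β : Type*} [Fintype ι] [Fintype β] (c : ι → ℝ) (F : β → ι → ι → ℝ) :
    ∑ j, ∑ k, c j * c k * ∑ i, F i j k = ∑ i, ∑ j, ∑ k, c j * c k * F i j k := by
  rw [Finset.sum_comm (s := (Finset.univ : Finset β))]
  refine Finset.sum_congr rfl fun j _ => ?_
  rw [Finset.sum_comm (s := (Finset.univ : Finset β))]
  refine Finset.sum_congr rfl fun k _ => ?_
  rw [Finset.mul_sum]

lemma ap_trace {ι α : Type*} [Fintype ι] [Fintype α] (K : ι → ι → ℝ)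
    (hs : ∀ j k, K j k = K k j) (hp : ∀ c : ι → ℝ, 0 ≤ ∑ j, ∑ k, c j * c k * K j k)
    (w : α → EuclideanSpace ℝ ι) (hw : Orthonormal ℝ w) :
    ∑ a, ∑ j, ∑ k, w a j * w a k * K j k ≤ ∑ j, K j j := by
  classical
  have hP : (Matrix.of K).PosSemidef := by
    rw [Matrix.posSemidef_iff_dotProduct_mulVec]
    refine ⟨?_, fun x => ?_⟩
    · ext j k; simp [Matrix.conjTranspose, hs k j]
    · refine (hp x).trans_eq ?_
      simp only [dotProduct, Matrix.mulVec, Finset.mul_sum, Pi.star_apply, star_trivial,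
        Matrix.of_apply]
      refine Finset.sum_congr rfl fun j _ => Finset.sum_congr rfl fun k _ => ?_
      ring
  obtain ⟨m, B, hB⟩ := Matrix.posSemidef_iff_eq_sum_vecMulVec.1 hP
  have hK : ∀ j k, K j k = ∑ r, B r j * B r k := by
    intro j k
    have := congrFun (congrFun hB j) k
    simpa [Matrix.sum_apply, Matrix.vecMulVec_apply] using this
  have hq : ∀ a, ∑ j, ∑ k, w a j * w a k * K j k
      = ∑ r, ‖inner ℝ (w a) (WithLp.toLp 2 (B r) : EuclideanSpace ℝ ι)‖ ^ 2 := by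
    intro a
    have : ∀ r, ‖inner ℝ (w a) (WithLp.toLp 2 (B r) : EuclideanSpace ℝ ι)‖ ^ 2
        = ∑ j, ∑ k, w a j * w a k * (B r j * B r k) := by
      intro r
      rw [Real.norm_eq_abs, sq_abs, PiLp.inner_apply, pow_two, Finset.sum_mul_sum]
      refine Finset.sum_congr rfl fun j _ => Finset.sum_congr rfl fun k _ => ?_
      simp; ring
    simp_rw [this, hK]
    exact ap_swap (w a) (fun r j k => B r j * B r k)
  simp_rw [hq]
  rw [Finset.sum_comm]
  have ht : ∑ j, K j j = ∑ r, ‖(WithLp.toLp 2 (B r) : EuclideanSpace ℝ ι)‖ ^ 2 := by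
    simp_rw [hK, EuclideanSpace.norm_sq_eq]
    rw [Finset.sum_comm]
    refine Finset.sum_congr rfl fun j _ => Finset.sum_congr rfl fun k _ => ?_
    simp [pow_two]
  rw [ht]
  exact Finset.sum_le_sum fun r _ => hw.sum_inner_products_le _

/-- label -/
noncomputable def apL (n : ℕ) (x : ℝ) : ℤ := ⌊10 * Real.arsinh (n * x)⌋
/-- rounding -/
noncomputable def apR (n : ℕ) (x : ℝ) : ℝ := Real.sinh ((apL n x : ℝ) / 10) / n

lemma apL_mono (n : ℕ) (hn : 0 < n) {x y : ℝ} (h : apL n x < apL n y) : x ≤ y := by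
  by_contra! h'
  have : apL n y ≤ apL n x := by
    unfold apL
    apply Int.floor_le_floor
    have : Real.arsinh (n * y) ≤ Real.arsinh (n * x) := by
      rw [Real.arsinh_le_arsinh]
      gcongr
    linarith
  omega

lemma apR_le (n : ℕ) (hn : 0 < n) (x : ℝ) : apR n x ≤ x := by
  unfold apR
  have hn' : (0:ℝ) < n := by exact_mod_cast hn
  rw [div_le_iff₀ hn']
  have h1 : (apL n x : ℝ) / 10 ≤ Real.arsinh (n * x) := by
    have := Int.floor_le (10 * Real.arsinh (n * x))
    unfold apL; linarith
  have := Real.sinh_le_sinh.2 h1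
  rw [Real.sinh_arsinh] at this
  linarith

lemma apR_ge (n : ℕ) (hn : 0 < n) (x : ℝ) : x - apR n x ≤ 1 / 8 * (|x| + 1 / n) := by
  unfold apR
  have hn' : (0:ℝ) < n := by exact_mod_cast hn
  set s := Real.arsinh (n * x) with hs
  have hx : n * x = Real.sinh s := by rw [hs, Real.sinh_arsinh]
  have h1 : s - 1 / 10 ≤ (apL n x : ℝ) / 10 := by
    have := Int.lt_floor_add_one (10 * Real.arsinh (n * x))
    unfold apL; linarith
  have h2 := Real.sinh_le_sinh.2 h1
  rw [Real.sinh_sub] at h2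
  have hc : Real.cosh s ≤ 1 + |Real.sinh s| := by
    refine (pow_le_pow_iff_left₀ (Real.cosh_pos s).le (by positivity) two_ne_zero).1 ?_
    rw [Real.cosh_sq]
    have := abs_nonneg (Real.sinh s)
    nlinarith [sq_abs (Real.sinh s)]
  have he : Real.cosh (1/10) + Real.sinh (1/10) ≤ 9 / 8 := by
    rw [Real.cosh_add_sinh]
    have := Real.exp_bound_div_one_sub_of_interval (x := 1/10) (by norm_num) (by norm_num)
    linarith
  have hc1 : 1 ≤ Real.cosh (1/10) := Real.one_le_cosh _
  have hs1 : 0 ≤ Real.sinh (1/10) := Real.sinh_nonneg_iff.2 (by norm_num)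
  have hfin : Real.sinh s - Real.sinh ((apL n x : ℝ) / 10) ≤ 1 / 8 * (|Real.sinh s| + 1) := by
    have a1 := abs_nonneg (Real.sinh s)
    have a2 := neg_abs_le (Real.sinh s)
    nlinarith [mul_le_mul_of_nonneg_right hc hs1,
      mul_le_mul_of_nonneg_right a2 (sub_nonneg.2 hc1), mul_le_mul_of_nonneg_left he a1]
  rw [← hx, abs_mul, abs_of_pos hn'] at hfin
  have e1 : x - Real.sinh ((apL n x : ℝ) / 10) / n
      = (n * x - Real.sinh ((apL n x : ℝ) / 10)) / n := by field_simp
  have e2 : 1 / 8 * (|x| + 1 / n) = (1 / 8 * (n * |x| + 1)) / n := by field_simp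
  rw [e1, e2]
  gcongr

lemma apL_range (n : ℕ) (x : ℝ) (hx : |x| ≤ 1) :
    apL n x ∈ Finset.Icc (⌊-(10 * Real.arsinh n)⌋) (⌊10 * Real.arsinh n⌋) := by
  rw [abs_le] at hx
  have hn' : (0:ℝ) ≤ n := by positivity
  have h1 : Real.arsinh (n * x) ≤ Real.arsinh n := Real.arsinh_le_arsinh.2 (by nlinarith)
  have h2 : Real.arsinh (-n) ≤ Real.arsinh (n * x) := Real.arsinh_le_arsinh.2 (by nlinarith)
  rw [Real.arsinh_neg] at h2
  unfold apL
  rw [Finset.mem_Icc]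
  constructor <;> apply Int.floor_le_floor <;> linarith

lemma ap_card (n : ℕ) (hn : 2 ≤ n) :
    ((Finset.Icc (⌊-(10 * Real.arsinh n)⌋) (⌊10 * Real.arsinh n⌋)).card : ℝ)
      ≤ 64 * Real.log n := by
  have hn2 : (2:ℝ) ≤ n := by exact_mod_cast hn
  have hA : Real.arsinh n ≤ 3 * Real.log n := by
    rw [Real.arsinh, show 3 * Real.log n = Real.log ((n:ℝ)^3) by rw [Real.log_pow]; norm_num]
    apply Real.log_le_log (by positivity)
    have : √(1 + (n:ℝ)^2) ≤ n + 1 := by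
      rw [Real.sqrt_le_left (by positivity)]; nlinarith
    nlinarith [mul_le_mul hn2 hn2 (by norm_num) (by positivity)]
  have hA0 : 0 ≤ Real.arsinh n := Real.arsinh_nonneg_iff.2 (by positivity)
  have hlog : 0.69 ≤ Real.log n := by
    have := Real.log_two_gt_d9
    have := Real.log_le_log (by norm_num) hn2
    linarith
  have h1 := Int.floor_le (10 * Real.arsinh n)
  have h2 := Int.lt_floor_add_one (-(10 * Real.arsinh n))
  have h3 : ⌊-(10 * Real.arsinh n)⌋ ≤ ⌊10 * Real.arsinh n⌋ + 1 := by
    have := Int.floor_le_floor (show -(10 * Real.arsinh n) ≤ 10 * Real.arsinh n by linarith)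
    omega
  have h4 := Int.card_Icc_of_le _ _ h3
  have h5 : ((Finset.Icc (⌊-(10 * Real.arsinh n)⌋) (⌊10 * Real.arsinh n⌋)).card : ℝ)
      = ⌊10 * Real.arsinh n⌋ + 1 - ⌊-(10 * Real.arsinh n)⌋ := by exact_mod_cast h4
  rw [h5]
  linarith

lemma ap_main {ι : Type*} [Fintype ι] [DecidableEq ι] (n : ℕ) (hn : 2 ≤ n) (y : ι → Fin n → ℝ)
    (h1 : ∀ j, ∑ i, |y j i| ≤ 1)
    (h2 : ∀ j k, ∑ i, |y j i - y k i| = if j = k then 0 else 1) :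
    (Fintype.card ι : ℝ) ≤ 128 * n * Real.log n := by
  classical
  have hn0 : 0 < n := by omega
  set I := Finset.Icc (⌊-(10 * Real.arsinh n)⌋) (⌊10 * Real.arsinh n⌋) with hI
  have hI' : (I.card : ℝ) ≤ 64 * Real.log n := ap_card n hn
  have hy1 : ∀ j i, |y j i| ≤ 1 := fun j i =>
    (Finset.single_le_sum (f := fun i => |y j i|) (fun i _ => abs_nonneg _)
      (Finset.mem_univ i)).trans (h1 j)
  let Φ : EuclideanSpace ℝ ι →ₗ[ℝ] (Fin n × I → ℝ) :=
    { toFun := fun c p => ∑ j, if apL n (y j p.1) = p.2 then c j else 0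
      map_add' := by
        intro c d; ext p
        simp only [Pi.add_apply, PiLp.add_apply, ← Finset.sum_add_distrib]
        refine Finset.sum_congr rfl fun j _ => ?_
        split_ifs <;> simp
      map_smul' := by
        intro t c; ext p
        simp [Finset.mul_sum] }
  set W := LinearMap.ker Φ with hW
  have hker : ∀ c ∈ W, ∀ i (v : ℤ), ∑ j, (if apL n (y j i) = v then c j else 0) = 0 := by
    intro c hc i v
    by_cases hv : v ∈ I
    · exact congrFun (LinearMap.mem_ker.1 hc) (i, ⟨v, hv⟩)
    · refine Finset.sum_eq_zero fun j _ => if_neg ?_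
      rintro rfl
      exact hv (apL_range n _ (hy1 j i))
  have hdim : Fintype.card ι ≤ Module.finrank ℝ W + n * I.card := by
    have e := LinearMap.finrank_range_add_finrank_ker Φ
    have e' := Submodule.finrank_le (LinearMap.range Φ)
    simp only [finrank_euclideanSpace, Module.finrank_fintype_fun_eq_card, Fintype.card_prod,
      Fintype.card_fin, Fintype.card_coe] at e e'
    rw [← hW] at e
    omega
  let b := stdOrthonormalBasis ℝ W
  let w : Fin (Module.finrank ℝ W) → EuclideanSpace ℝ ι := fun a => (b a : EuclideanSpace ℝ ι)
  have hw : Orthonormal ℝ w := b.orthonormal.comp_linearIsometry W.subtypeₗᵢ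
  have hwW : ∀ a, w a ∈ W := fun a => (b a).2
  let K : ι → ι → ℝ := fun j k =>
    ∑ i, 2 * apK (fun j => apL n (y j i)) (fun j => y j i - apR n (y j i)) j k
  have hKs : ∀ j k, K j k = K k j := by
    intro j k
    refine Finset.sum_congr rfl fun i _ => ?_
    simp only [apK, min_comm, eq_comm]
  have hswap : ∀ (c : ι → ℝ) (F : Fin n → ι → ι → ℝ),
      ∑ j, ∑ k, c j * c k * ∑ i, F i j k = ∑ i, ∑ j, ∑ k, c j * c k * F i j k := fun c F => ap_swap c F
  have hKp : ∀ c : ι → ℝ, 0 ≤ ∑ j, ∑ k, c j * c k * K j k := by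
    intro c
    rw [hswap]
    refine Finset.sum_nonneg fun i _ => ?_
    have := apK_psd (fun j => apL n (y j i)) (fun j => y j i - apR n (y j i))
      (fun j => by have := apR_le n hn0 (y j i); linarith) c
    have e : ∀ j k, c j * c k * (2 * apK (fun j => apL n (y j i))
        (fun j => y j i - apR n (y j i)) j k) = 2 * (c j * c k * apK (fun j => apL n (y j i))
        (fun j => y j i - apR n (y j i)) j k) := fun j k => by ring
    simp_rw [e, ← Finset.mul_sum]
    linarith
  have htr := ap_trace K hKs hKp w hw
  have hone : ∀ a, ∑ j, ∑ k, w a j * w a k * K j k = 1 := by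
    intro a
    have hd : ∑ j, ∑ k, w a j * w a k * ∑ i, |y j i - y k i| = -∑ j, ∑ k, w a j * w a k * K j k := by
      rw [hswap, hswap, ← Finset.sum_neg_distrib]
      refine Finset.sum_congr rfl fun i _ => ?_
      refine ap_coord (fun j => y j i) (fun j => apR n (y j i)) (fun j => apL n (y j i)) (w a)
        (hker _ (hwW a) i) (fun j k h => apL_mono n hn0 h) (fun j k h => ?_)
      simp only [apR]
      rw [h]
    have hsum : ∑ j, w a j = 0 := by
      have := ap_fiber (w a) (fun j => apL n (y j ⟨0, hn0⟩)) (hker _ (hwW a) ⟨0, hn0⟩) (fun _ => 1)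
      simpa using this
    have hnorm : ∑ j, w a j * w a j = 1 := by
      have := hw.1 a
      have h' : ‖w a‖ ^ 2 = 1 := by rw [this]; norm_num
      rw [EuclideanSpace.norm_sq_eq] at h'
      rw [← h']
      refine Finset.sum_congr rfl fun j _ => ?_
      rw [Real.norm_eq_abs, sq_abs, pow_two]
    have hd2 : ∑ j, ∑ k, w a j * w a k * ∑ i, |y j i - y k i| = -1 := by
      have : ∀ j k, w a j * w a k * ∑ i, |y j i - y k i|
          = w a j * w a k - if j = k then w a j * w a k else 0 := by
        intro j k
        rw [h2]; split_ifs <;> ring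
      simp_rw [this, Finset.sum_sub_distrib, ← Finset.mul_sum, hsum]
      simp [hnorm]
    linarith
  simp_rw [hone] at htr
  have hKd : ∀ j, K j j ≤ 1 / 2 := by
    intro j
    have hle : K j j ≤ ∑ i, (1 / 4 * |y j i| + 1 / 4 * (1 / (n:ℝ))) := by
      refine Finset.sum_le_sum fun i _ => ?_
      have := apR_ge n hn0 (y j i)
      simp only [apK, if_true, min_self]
      linarith
    rw [Finset.sum_add_distrib, ← Finset.mul_sum] at hle
    have hn' : (n:ℝ) ≠ 0 := by positivity
    have e : ∑ i : Fin n, 1 / 4 * (1 / (n:ℝ)) = 1 / 4 := by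
      simp; field_simp
    rw [e] at hle
    linarith [h1 j]
  have htr2 : ∑ j, K j j ≤ Fintype.card ι * (1/2) := by
    refine (Finset.sum_le_sum fun j _ => hKd j).trans_eq ?_
    simp
  have hd' : (Fintype.card ι : ℝ) ≤ Module.finrank ℝ W + n * I.card := by exact_mod_cast hdim
  simp at htr
  have : (n:ℝ) * I.card ≤ n * (64 * Real.log n) := by gcongr
  linarith

theorem alon_pudlak_l1_bound :
    ∃ c : ℝ, 0 < c ∧ ∀ (n : ℕ), 2 ≤ n →
      ∀ S : Finset (PiLp 1 (fun _ : Fin n => ℝ)),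
        (∃ lam : ℝ, 0 < lam ∧ ∀ x ∈ S, ∀ y ∈ S, x ≠ y → ‖x - y‖ = lam) →
        (S.card : ℝ) ≤ c * n * Real.log n := by
  refine ⟨128, by norm_num, fun n hn S ⟨lam, hlam, hS⟩ => ?_⟩
  classical
  have hdist : ∀ x ∈ S, ∀ z ∈ S, ∑ i, |x i - z i| / lam = if x = z then 0 else 1 := by
    intro x hx z hz
    split_ifs with h
    · simp [h]
    · have := hS x hx z hz h
      rw [PiLp.norm_eq_of_L1] at this
      rw [← Finset.sum_div, div_eq_one_iff_eq hlam.ne', ← this]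
      simp
  rcases S.eq_empty_or_nonempty with rfl | ⟨x0, hx0⟩
  · have : 0 ≤ Real.log n := Real.log_natCast_nonneg n
    simp; positivity
  have := ap_main (ι := S) n hn (fun x i => (x.1 i - x0 i) / lam) ?_ ?_
  · simpa using this
  · intro j
    have := hdist j.1 j.2 x0 hx0
    simp only [abs_div, abs_of_pos hlam]
    rw [this]; split_ifs <;> norm_num
  · intro j k
    have := hdist j.1 j.2 k.1 k.2
    simp only [← sub_div, abs_div, abs_of_pos hlam, sub_sub_sub_cancel_right]
    rw [this]
    by_cases h : j = k
    · rw [if_pos h, if_pos (congrArg _ h)]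
    · rw [if_neg h, if_neg (fun h' => h (Subtype.ext h'))]
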